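/- Let F be a field with |F| > 2 and let m ≥ 5 be an integer. Then there exists a tiling (U, V) of F^{2m} such that both U and V are projective, both U and V are full-rank (their affine spans equal F^{2m}), and both U and V are aperiodic (per(U) = per(V) = {0}). Moreover, if F is finite, U and V can be chosen with |U| = |V| = |F|^m. -/

import Mathlib

/-- `(U, V)` is a tiling of the ambient space `S`: every element of `S` is uniquely
represented as the sum of an element of `U` and an element of `V`. -/
def IsTiling {S : Type*} [AddCommGroup S] (U V : Set S) : Prop :=
  ∀ s : S, ∃! p : S × S, p.1 ∈ U ∧ p.2 ∈ V ∧ p.1 + p.2 = s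

/-- `U` is projective: `F·U = U`, i.e. `U` is closed under scalar multiplication. -/
def IsProjective (F : Type*) {S : Type*} [Field F] [AddCommGroup S] [Module F S]
    (U : Set S) : Prop :=
  ∀ (a : F) ⦃u : S⦄, u ∈ U → a • u ∈ U

/-- The set of periods of `X`: vectors `w` with `X + w = X`. -/
def periods {S : Type*} [AddCommGroup S] (X : Set S) : Set S :=
  {w | (fun v => v + w) '' X = X}

/-!
For `h : X → Y` and `f : Y → X`, the sets `{(x, h x)}` and `{(f y, y)}` tile `X × Y` as soon as
each map `x ↦ x + f (q - h x)` is bijective. This is automatic when, for each `q`, the difference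
`f (q - h x) - f q` can be added to and subtracted from `x` without changing `h x`.

Both maps are modifications of the cyclic shift `x ↦ (xᵢ₊₁)ᵢ` of `F ^ m`: `h` keeps the `i`-th
entry only if `x` is supported in `{i - 1, i, i + 1}`, and `f` keeps it only if `xᵢ ≠ 0`. Since
`m ≥ 5`, `h x` has at most one nonzero entry. If it is the `i`-th, then `f (q - h x) - f q` is
supported in `{i - 1, i}`, and the `i`-th entry of `h` does not notice such a change.
-/

open Set Function

theorem IsTiling.image {S T E : Type*} [AddCommGroup S] [AddCommGroup T] [EquivLike E S T]
    [AddEquivClass E S T] {U V : Set S} (hUV : IsTiling U V) (e : E) :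
    IsTiling (e '' U) (e '' V) := by
  intro t
  obtain ⟨s, rfl⟩ := EquivLike.surjective e t
  obtain ⟨⟨u, v⟩, ⟨hu, hv, hs⟩, huniq⟩ := hUV s
  refine ⟨(e u, e v), ⟨mem_image_of_mem e hu, mem_image_of_mem e hv, ?_⟩, ?_⟩
  · rw [← map_add, hs]
  · rintro ⟨_, _⟩ ⟨⟨u', hu', rfl⟩, ⟨v', hv', rfl⟩, hs'⟩
    rw [← map_add] at hs'
    obtain ⟨rfl, rfl⟩ := Prod.mk.inj (huniq (u', v') ⟨hu', hv', EquivLike.injective e hs'⟩)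
    rfl

theorem IsProjective.image {F S T L : Type*} [Field F] [AddCommGroup S] [Module F S]
    [AddCommGroup T] [Module F T] [FunLike L S T] [MulActionSemiHomClass L (id : F → F) S T]
    {U : Set S} (hU : IsProjective F U) (e : L) : IsProjective F (e '' U) := by
  rintro a _ ⟨u, hu, rfl⟩
  exact ⟨a • u, hU a hu, map_smul e a u⟩

theorem affineSpan_image_eq_top {R S T : Type*} [Ring R] [AddCommGroup S] [Module R S]
    [AddCommGroup T] [Module R T] {U : Set S} (hU : affineSpan R U = ⊤) (e : S ≃ₗ[R] T) :
    affineSpan R (e '' U) = ⊤ :=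
  (AffineEquiv.span_eq_top_iff e.toAffineEquiv).1 hU

theorem periods_image {S T E : Type*} [AddCommGroup S] [AddCommGroup T] [EquivLike E S T]
    [AddEquivClass E S T] (e : E) (U : Set S) : periods (e '' U) = e '' periods U := by
  ext t
  obtain ⟨w, rfl⟩ := EquivLike.surjective e t
  rw [(EquivLike.injective e).mem_set_image]
  change (fun v => v + e w) '' (e '' U) = e '' U ↔ (fun v => v + w) '' U = U
  rw [← (EquivLike.injective e).image_injective.eq_iff]
  simp only [image_image, map_add]

theorem periods_image_eq_singleton_zero {S T E : Type*} [AddCommGroup S] [AddCommGroup T]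
    [EquivLike E S T] [AddEquivClass E S T] {U : Set S} (hU : periods U = {0}) (e : E) :
    periods (e '' U) = {0} := by
  rw [periods_image, hU, image_singleton, map_zero]

section Graph

theorem isProjective_graphOn {F X Y : Type*} [Field F] [AddCommGroup X] [Module F X]
    [AddCommGroup Y] [Module F Y] {h : X → Y} (hh : ∀ (a : F) x, h (a • x) = a • h x) :
    IsProjective F (univ.graphOn h) := by
  rintro a _ ⟨x, -, rfl⟩
  exact ⟨a • x, mem_univ _, by simp [hh]⟩

theorem affineSpan_graphOn_eq_top {R X Y : Type*} [Ring R] [AddCommGroup X] [Module R X]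
    [AddCommGroup Y] [Module R Y] {h : X → Y} (h0 : h 0 = 0)
    (hker : Submodule.span R {x | h x = 0} = ⊤) (hrange : Submodule.span R (range h) = ⊤) :
    affineSpan R (univ.graphOn h) = ⊤ := by
  set P := Submodule.span R (univ.graphOn h) with hP
  have hgraph (x : X) : (x, h x) ∈ P := Submodule.subset_span ⟨x, mem_univ x, rfl⟩
  have hinl : P.comap (LinearMap.inl R X Y) = ⊤ := by
    refine top_le_iff.1 (hker.ge.trans (Submodule.span_le.2 fun x (hx : h x = 0) => ?_))
    simpa [hx] using hgraph x
  have hinr : P.comap (LinearMap.inr R X Y) = ⊤ := by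
    refine top_le_iff.1 (hrange.ge.trans (Submodule.span_le.2 ?_))
    rintro _ ⟨x, rfl⟩
    have hx : (x, 0) ∈ P := Submodule.eq_top_iff'.1 hinl x
    simpa using P.sub_mem (hgraph x) hx
  have hPtop : P = ⊤ := by
    refine Submodule.eq_top_iff'.2 fun ⟨x, y⟩ => ?_
    simpa using P.add_mem (Submodule.eq_top_iff'.1 hinl x) (Submodule.eq_top_iff'.1 hinr y)
  have hzero : (0 : X × Y) ∈ univ.graphOn h := ⟨0, mem_univ 0, by simp [h0]⟩
  apply SetLike.coe_injective
  rw [← insert_eq_of_mem hzero, affineSpan_insert_zero, ← hP, hPtop]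
  rfl

theorem bijective_add_comp {X Y : Type*} [AddGroup X] {h : X → Y} {φ : Y → X}
    (hadd : ∀ x, h (x + φ (h x)) = h x) (hsub : ∀ x, h (x - φ (h x)) = h x) :
    Bijective fun x => x + φ (h x) :=
  bijective_iff_has_inverse.2
    ⟨fun x => x - φ (h x), fun x => by simp [hadd], fun x => by simp [hsub]⟩

variable {X Y : Type*} [AddCommGroup X] [AddCommGroup Y] {h : X → Y} {f : Y → X}

theorem isTiling_graphOn_of_bijective (hbij : ∀ q, Bijective fun x => x + f (q - h x)) :
    IsTiling (univ.graphOn h) (Prod.swap '' univ.graphOn f) := by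
  rintro ⟨p, q⟩
  obtain ⟨x, hx, hxuniq⟩ := (hbij q).existsUnique p
  refine ⟨((x, h x), (f (q - h x), q - h x)), ⟨⟨x, mem_univ x, rfl⟩,
    ⟨_, ⟨_, mem_univ _, rfl⟩, rfl⟩, Prod.ext hx (add_sub_cancel _ _)⟩, ?_⟩
  rintro ⟨_, _⟩ ⟨⟨z, -, rfl⟩, ⟨_, ⟨y, -, rfl⟩, rfl⟩, hs⟩
  obtain ⟨hz, hy⟩ := Prod.mk.inj hs
  obtain rfl : y = q - h z := eq_sub_of_add_eq' hy
  obtain rfl : z = x := hxuniq z hz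
  rfl

theorem isTiling_graphOn (hadd : ∀ x q, h (x + (f (q - h x) - f q)) = h x)
    (hsub : ∀ x q, h (x - (f (q - h x) - f q)) = h x) :
    IsTiling (univ.graphOn h) (Prod.swap '' univ.graphOn f) := by
  refine isTiling_graphOn_of_bijective fun q => ?_
  have hshear : Bijective fun x => x + (f (q - h x) - f q) :=
    bijective_add_comp (φ := fun y => f (q - y) - f q) (hadd · q) (hsub · q)
  convert (Equiv.addRight (f q)).bijective.comp hshear using 2 with x
  simp [add_assoc]

theorem apply_add_of_mem_periods_graphOn {w : X × Y} (hw : w ∈ periods (univ.graphOn h)) (x : X) :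
    h (x + w.1) = h x + w.2 := by
  have hxw : (x, h x) + w ∈ univ.graphOn h :=
    hw.subset (mem_image_of_mem _ ⟨x, mem_univ x, rfl⟩)
  exact (mem_graphOn.1 hxw).2

theorem periods_graphOn_eq_singleton_zero (h0 : h 0 = 0)
    (hper : ∀ w, (∀ x, h (x + w) = h x + h w) → w = 0) : periods (univ.graphOn h) = {0} := by
  refine Subset.antisymm (fun w hw => ?_) (by simp [periods])
  have hw2 : w.2 = h w.1 := by simpa [h0] using (apply_add_of_mem_periods_graphOn hw 0).symm
  have hw1 : w.1 = 0 := hper w.1 fun x => hw2 ▸ apply_add_of_mem_periods_graphOn hw x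
  exact Prod.ext hw1 (by simp [hw2, hw1, h0])

end Graph

theorem span_eq_top_of_single_mem {R I : Type*} [Semiring R] [Finite I] [DecidableEq I]
    {A : Set (I → R)} (hA : ∀ j, Pi.single j 1 ∈ Submodule.span R A) :
    Submodule.span R A = ⊤ := by
  rw [← top_le_iff, ← (Pi.basisFun R I).span_eq, Submodule.span_le]
  rintro _ ⟨j, rfl⟩
  simpa using hA j

section GatedShift

open Classical in
/-- The shift of `y` along `s`, in which the `i`-th entry is only let through if `y i ≠ 0`. Its
graph, with the two factors swapped, is the set `V` of the tiling. -/
noncomputable def gatedShift {I M : Type*} [Zero M] (s : I → I) (y : I → M) : I → M :=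
  fun i => if y i ≠ 0 then y (s i) else 0

variable {I M : Type*} {s : I → I}

theorem gatedShift_zero [Zero M] : gatedShift s (0 : I → M) = 0 := by
  ext i
  simp [gatedShift]

theorem gatedShift_smul [MulZeroClass M] [NoZeroDivisors M] (a : M) (y : I → M) :
    gatedShift s (a • y) = a • gatedShift s y := by
  ext i
  by_cases ha : a = 0
  · simp [gatedShift, ha]
  · by_cases hi : y i = 0 <;> simp [gatedShift, ha, hi]

theorem gatedShift_apply_congr [Zero M] {y z : I → M} {i : I} (hi : y i = z i)
    (hsi : y (s i) = z (s i)) : gatedShift s y i = gatedShift s z i := by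
  rw [gatedShift, gatedShift, hi, hsi]

theorem gatedShift_single [Zero M] [DecidableEq I] {j : I} (hj : s j ≠ j) (c : M) :
    gatedShift s (Pi.single j c) = 0 := by
  ext i
  by_cases hi : i = j <;> simp [gatedShift, hi, hj]

theorem gatedShift_single_add_single [AddZeroClass M] [DecidableEq I] {j : I} (h1 : s j ≠ j)
    (h2 : s (s j) ≠ j) (h1' : s (s j) ≠ s j) (c : M) :
    gatedShift s (Pi.single j c + Pi.single (s j) c) = Pi.single j c := by
  ext i
  by_cases hi : i = j
  · simp +contextual [gatedShift, hi, h1, h1.symm, eq_comm]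
  · by_cases hi' : i = s j <;> simp [gatedShift, hi, hi', h1, h2, h1']

theorem periods_graphOn_gatedShift_eq_singleton_zero [AddCommGroup M] [Nontrivial M]
    (h1 : ∀ i, s i ≠ i) :
    periods (univ.graphOn (gatedShift s : (I → M) → I → M)) = {0} := by
  classical
  refine periods_graphOn_eq_singleton_zero gatedShift_zero fun w hw => ?_
  obtain ⟨c, hc⟩ := exists_ne (0 : M)
  ext j
  by_contra! hj : w j ≠ 0
  exact hc (by simpa [gatedShift, hj, (h1 j).symm] using congrFun (hw (Pi.single (s j) c)) j)

theorem affineSpan_graphOn_gatedShift_eq_top [Ring M] [Finite I] (h2 : ∀ i, s (s i) ≠ i) :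
    affineSpan M (univ.graphOn (gatedShift s : (I → M) → I → M)) = ⊤ := by
  classical
  have h1 (i : I) : s i ≠ i := fun h => h2 i (by rw [h, h])
  refine affineSpan_graphOn_eq_top gatedShift_zero
    (span_eq_top_of_single_mem fun j => ?_) (span_eq_top_of_single_mem fun j => ?_)
  · exact Submodule.subset_span (gatedShift_single (h1 j) 1)
  · exact Submodule.subset_span ⟨_, gatedShift_single_add_single (h1 j) (h2 j) (h1 (s j)) 1⟩

end GatedShift

section Window

variable {I : Type*} {σ : Equiv.Perm I}

/-- The window at `i`: the point `i` with its predecessor and its successor under `σ`. -/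
def window (σ : Equiv.Perm I) (i : I) : Set I :=
  {σ.symm i, i, σ i}

/-- The permutation `σ` has no cycle of length at most four. It is enough to exclude fixed points of
`σ ^ 3` and of `σ ^ 4`, since the latter fixes every point of a cycle of length one or two. -/
def NoShortCycle (σ : Equiv.Perm I) : Prop :=
  ∀ i, σ (σ (σ i)) ≠ i ∧ σ (σ (σ (σ i))) ≠ i

namespace NoShortCycle

theorem apply_apply_ne (hσ : NoShortCycle σ) (i : I) : σ (σ i) ≠ i :=
  fun h => (hσ i).2 (by rw [h, h])

theorem apply_ne (hσ : NoShortCycle σ) (i : I) : σ i ≠ i :=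
  fun h => hσ.apply_apply_ne i (by rw [h, h])

theorem apply_apply_notMem_window (hσ : NoShortCycle σ) (i : I) : σ (σ i) ∉ window σ i := by
  simp [window, Equiv.eq_symm_apply, hσ i, hσ.apply_apply_ne i, hσ.apply_ne i]

theorem apply_apply_apply_notMem_window (hσ : NoShortCycle σ) (i : I) :
    σ (σ (σ i)) ∉ window σ i := by
  simp [window, Equiv.eq_symm_apply, hσ i, hσ.apply_apply_ne i]

theorem eq_of_apply_mem_window (hσ : NoShortCycle σ) {i k : I} (hik : σ i ∈ window σ k)
    (hki : σ k ∈ window σ i) : i = k := by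
  simp only [window, mem_insert_iff, mem_singleton_iff, Equiv.eq_symm_apply,
    EmbeddingLike.apply_eq_iff_eq] at hik hki
  -- If `i ≠ k`, then `σ ^ 2`, `σ ^ 3` or `σ ^ 4` would fix a point.
  grind [hσ i, hσ k, hσ.apply_apply_ne i]

theorem apply_notMem_pair (hσ : NoShortCycle σ) (i : I) : σ i ∉ ({σ.symm i, i} : Set I) := by
  simp [Equiv.eq_symm_apply, hσ.apply_apply_ne i, hσ.apply_ne i]

end NoShortCycle

theorem noShortCycle_finRotate {m : ℕ} (hm : 5 ≤ m) : NoShortCycle (finRotate m) := by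
  obtain ⟨n, rfl⟩ := Nat.exists_eq_add_of_le' hm
  intro i
  simp only [finRotate_apply, add_assoc, ne_eq, add_eq_left]
  constructor <;> simp [Fin.ext_iff, Fin.val_add, Nat.mod_eq_of_lt]

end Window

section WindowShift

variable {I M : Type*} {σ : Equiv.Perm I}

open Classical in
/-- The shift of `x` along `σ`, in which the `i`-th entry is only let through if `x` is supported
in the window at `i`. Its graph is the set `U` of the tiling. -/
noncomputable def windowShift [Zero M] (σ : Equiv.Perm I) (x : I → M) : I → M :=
  fun i => if support x ⊆ window σ i then x (σ i) else 0

theorem windowShift_apply [Zero M] {x : I → M} {i : I} (hx : support x ⊆ window σ i) :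
    windowShift σ x i = x (σ i) :=
  if_pos hx

theorem windowShift_apply_eq_zero [Zero M] {x : I → M} {i k : I} (hk : k ∉ window σ i)
    (hx : x k ≠ 0) : windowShift σ x i = 0 :=
  if_neg fun h => hk (h hx)

theorem support_subset_of_windowShift_ne_zero [Zero M] {x : I → M} {i : I}
    (hi : windowShift σ x i ≠ 0) : support x ⊆ window σ i :=
  not_not.1 fun h => hi (if_neg h)

theorem windowShift_zero [Zero M] : windowShift σ (0 : I → M) = 0 := by
  ext i
  simp [windowShift]

theorem windowShift_smul [MulZeroClass M] [NoZeroDivisors M] (a : M) (x : I → M) :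
    windowShift σ (a • x) = a • windowShift σ x := by
  obtain rfl | ha := eq_or_ne a 0
  · simp [windowShift_zero]
  · have hsupp : support (a • x) = support x := by
      ext i
      simp [ha]
    ext i
    by_cases hi : support x ⊆ window σ i <;> simp [windowShift, hsupp, hi]

theorem windowShift_eq_single [Zero M] [DecidableEq I] (hσ : NoShortCycle σ) {x : I → M} {i : I}
    (hx : support x ⊆ window σ i) (hi : x (σ i) ≠ 0) : windowShift σ x = Pi.single i (x (σ i)) := by
  ext k
  obtain rfl | hk := eq_or_ne k i
  · rw [windowShift_apply hx, Pi.single_eq_same]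
  rw [Pi.single_eq_of_ne hk]
  by_contra hxk
  have hsupp := support_subset_of_windowShift_ne_zero hxk
  rw [windowShift_apply hsupp] at hxk
  exact hk (hσ.eq_of_apply_mem_window (hx hxk) (hsupp hi))

theorem windowShift_eq_zero_or_single [Zero M] [DecidableEq I] (hσ : NoShortCycle σ) (x : I → M) :
    windowShift σ x = 0 ∨ ∃ i, support x ⊆ window σ i ∧ x (σ i) ≠ 0 ∧
      windowShift σ x = Pi.single i (x (σ i)) := by
  refine or_iff_not_imp_left.2 fun hne => ?_
  obtain ⟨i, hi⟩ := ne_iff.1 hne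
  have hx := support_subset_of_windowShift_ne_zero hi
  rw [windowShift_apply hx] at hi
  exact ⟨i, hx, hi, windowShift_eq_single hσ hx hi⟩

theorem windowShift_add_of_support_subset [AddZeroClass M] (hσ : NoShortCycle σ) {x l : I → M}
    {i : I} (hx : support x ⊆ window σ i) (hi : x (σ i) ≠ 0)
    (hl : support l ⊆ {σ.symm i, i}) :
    windowShift σ (x + l) = windowShift σ x := by
  classical
  have hli : l (σ i) = 0 := notMem_support.1 fun hmem => hσ.apply_notMem_pair i (hl hmem)
  have hxl : (x + l) (σ i) = x (σ i) := by simp [hli]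
  have hsupp : support (x + l) ⊆ window σ i :=
    (support_add x l).trans (union_subset hx (hl.trans (by grind [window])))
  rw [windowShift_eq_single hσ hsupp (hxl ▸ hi), windowShift_eq_single hσ hx hi, hxl]

theorem windowShift_single [Zero M] [DecidableEq I] (hσ : NoShortCycle σ) (i : I) {c : M}
    (hc : c ≠ 0) : windowShift σ (Pi.single (σ i) c) = Pi.single i c := by
  have hsupp : support (Pi.single (σ i) c : I → M) ⊆ window σ i :=
    Pi.support_single_subset.trans (by simp [window])
  simpa using windowShift_eq_single hσ hsupp (by simpa using hc)

theorem windowShift_eq_zero_of_ne_zero [Zero M] (hσ : NoShortCycle σ) {x : I → M} (j : I)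
    (hx : ∀ k ≠ j, x k ≠ 0) : windowShift σ x = 0 := by
  ext i
  obtain rfl | hj := eq_or_ne (σ (σ i)) j
  · refine windowShift_apply_eq_zero (hσ.apply_apply_apply_notMem_window i) (hx _ ?_)
    exact hσ.apply_ne _
  · exact windowShift_apply_eq_zero (hσ.apply_apply_notMem_window i) (hx _ hj)

theorem periods_graphOn_windowShift_eq_singleton_zero [AddCommGroup M] [Nontrivial M]
    (hσ : NoShortCycle σ) :
    periods (univ.graphOn (windowShift σ : (I → M) → I → M)) = {0} := by
  classical
  refine periods_graphOn_eq_singleton_zero windowShift_zero fun w hw => ?_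
  obtain ⟨c, hc⟩ := exists_ne (0 : M)
  have hw0 : windowShift σ w = 0 := by
    refine (windowShift_eq_zero_or_single hσ w).resolve_right ?_
    rintro ⟨i, hsupp, hi, hwi⟩
    have hout := hσ.apply_apply_notMem_window i
    have hwout : w (σ (σ i)) = 0 := notMem_support.1 fun h => hout (hsupp h)
    have hshift := congrFun (hw (Pi.single (σ (σ i)) c)) i
    rw [windowShift_apply_eq_zero hout (by simpa [hwout] using hc), Pi.add_apply,
      windowShift_apply_eq_zero hout (by simpa using hc), hwi, Pi.single_eq_same,
      zero_add] at hshift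
    exact hi hshift.symm
  ext j
  obtain ⟨i, rfl⟩ := σ.surjective j
  have hshift : windowShift σ (Pi.single (σ i) c + w) i = c := by
    rw [hw, hw0, add_zero, windowShift_single hσ i hc, Pi.single_eq_same]
  rw [windowShift_apply (support_subset_of_windowShift_ne_zero (hshift.trans_ne hc))] at hshift
  simpa using hshift

theorem affineSpan_graphOn_windowShift_eq_top [Ring M] [Nontrivial M] [Finite I]
    (hσ : NoShortCycle σ) :
    affineSpan M (univ.graphOn (windowShift σ : (I → M) → I → M)) = ⊤ := by
  classical
  refine affineSpan_graphOn_eq_top windowShift_zero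
    (span_eq_top_of_single_mem fun j => ?_) (span_eq_top_of_single_mem fun i => ?_)
  · have hone : windowShift σ (1 : I → M) = 0 := windowShift_eq_zero_of_ne_zero hσ j (by simp)
    have hsub : windowShift σ (1 - Pi.single j 1 : I → M) = 0 :=
      windowShift_eq_zero_of_ne_zero hσ j fun k hk => by simp [hk]
    have hspan {x : I → M} (hx : windowShift σ x = 0) :
        x ∈ Submodule.span M {x : I → M | windowShift σ x = 0} := Submodule.subset_span hx
    simpa using Submodule.sub_mem _ (hspan hone) (hspan hsub)
  · exact Submodule.subset_span ⟨_, windowShift_single hσ i one_ne_zero⟩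

end WindowShift

theorem support_gatedShift_sub_subset {I M : Type*} [AddGroup M] [DecidableEq I]
    (σ : Equiv.Perm I) (q : I → M) (i : I) (c : M) :
    support (gatedShift σ (q - Pi.single i c) - gatedShift σ q) ⊆ {σ.symm i, i} := by
  intro k hk
  contrapose! hk
  obtain ⟨hks, hki⟩ : σ k ≠ i ∧ k ≠ i := by simpa [Equiv.eq_symm_apply] using hk
  have hk0 := gatedShift_apply_congr (s := σ) (y := q - Pi.single i c) (z := q) (i := k)
    (by simp [hki]) (by simp [hks])
  simp [hk0]

theorem isTiling_windowShift_gatedShift {I M : Type*} [AddCommGroup M] {σ : Equiv.Perm I}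
    (hσ : NoShortCycle σ) :
    IsTiling (univ.graphOn (windowShift σ : (I → M) → I → M))
      (Prod.swap '' univ.graphOn (gatedShift σ)) := by
  classical
  apply isTiling_graphOn <;> intro x q <;>
    obtain hx | ⟨i, hx, hi, hxi⟩ := windowShift_eq_zero_or_single hσ x
  · simp [hx]
  · exact windowShift_add_of_support_subset hσ hx hi (hxi ▸ support_gatedShift_sub_subset σ q i _)
  · simp [hx]
  · rw [sub_eq_add_neg]
    refine windowShift_add_of_support_subset hσ hx hi ?_
    rw [support_neg, hxi]
    exact support_gatedShift_sub_subset σ q i _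

theorem statement5_general {F : Type*} [Field F] (m : ℕ) (hm : 5 ≤ m) :
    ∃ U V : Set (Fin (2 * m) → F),
      IsTiling U V ∧
      IsProjective F U ∧ IsProjective F V ∧
      affineSpan F U = ⊤ ∧ affineSpan F V = ⊤ ∧
      periods U = {0} ∧ periods V = {0} ∧
      (∀ _ : Finite F, U.ncard = Nat.card F ^ m ∧ V.ncard = Nat.card F ^ m) := by
  have hσ : NoShortCycle (finRotate m) := noShortCycle_finRotate hm
  let e : ((Fin m → F) × (Fin m → F)) ≃ₗ[F] (Fin (2 * m) → F) :=
    LinearEquiv.ofFinrankEq _ _ (by simp [two_mul])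
  let swapE := (LinearEquiv.prodComm F (Fin m → F) (Fin m → F)).trans e
  have hswap (A : Set ((Fin m → F) × (Fin m → F))) : swapE '' A = e '' (Prod.swap '' A) :=
    image_comp e Prod.swap A
  have hcard : (univ : Set (Fin m → F)).ncard = Nat.card F ^ m := by
    rw [ncard_univ, Nat.card_fun, Nat.card_fin]
  refine ⟨e '' univ.graphOn (windowShift (finRotate m)),
    swapE '' univ.graphOn (gatedShift (finRotate m)), ?_,
    (isProjective_graphOn windowShift_smul).image e,
    (isProjective_graphOn gatedShift_smul).image swapE,
    affineSpan_image_eq_top (affineSpan_graphOn_windowShift_eq_top hσ) e,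
    affineSpan_image_eq_top (affineSpan_graphOn_gatedShift_eq_top hσ.apply_apply_ne) swapE,
    periods_image_eq_singleton_zero (periods_graphOn_windowShift_eq_singleton_zero hσ) e,
    periods_image_eq_singleton_zero (periods_graphOn_gatedShift_eq_singleton_zero hσ.apply_ne)
      swapE, fun _ => ⟨?_, ?_⟩⟩
  · rw [hswap]
    exact (isTiling_windowShift_gatedShift hσ).image e
  · rw [ncard_image_of_injective _ e.injective, ncard_graphOn, hcard]
  · rw [ncard_image_of_injective _ swapE.injective, ncard_graphOn, hcard]

theorem statement5 {F : Type*} [Field F] (hF : ∃ a : F, a ≠ 0 ∧ a ≠ 1)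
    (m : ℕ) (hm : 5 ≤ m) :
    ∃ U V : Set (Fin (2 * m) → F),
      IsTiling U V ∧
      IsProjective F U ∧ IsProjective F V ∧
      affineSpan F U = ⊤ ∧ affineSpan F V = ⊤ ∧
      periods U = {0} ∧ periods V = {0} ∧
      (∀ _ : Finite F, U.ncard = Nat.card F ^ m ∧ V.ncard = Nat.card F ^ m) :=
  statement5_general m hm
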